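/- Suppose ψ̃ has M vanishing moments. Then for every function f : ℝ² → ℝ all of whose partial derivatives ∂^{a+b}/∂x^a∂y^b f with 0 ≤ a ≤ M, 0 ≤ b ≤ M exist and are continuous, every σ₁, σ₂ > 0 and every θ₁, θ₂ ∈ ℝ, ∬_{ℝ²} f(x,y) ψ̃(σ₁x − θ₁) ψ̃(σ₂y − θ₂) dx dy = (σ₁σ₂)^{−M} ∬_{ℝ²} Ψ_M(σ₁x − θ₁) Ψ_M(σ₂y − θ₂) · ∂^{2M} f/∂x^M∂y^M (x,y) dx dy, both integrands being supported in the rectangle R(σ₁,θ₁,σ₂,θ₂). -/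

import Mathlib

open MeasureTheory

/-- Iterated antiderivatives of a wavelet: `Psi L ψ 0 = ψ` and
`Psi L ψ (m+1) x = ∫_{-L}^x Psi L ψ m t dt`. -/
noncomputable def Psi (L : ℝ) (ψ : ℝ → ℝ) : ℕ → ℝ → ℝ
  | 0 => ψ
  | m + 1 => fun x => ∫ t in (-L)..x, Psi L ψ m t

/-- Mixed partial derivative `∂^{a+b} f/∂x^a ∂y^b` of `f : ℝ² → ℝ` (first `a` times
in `x`, then `b` times in `y`). -/
noncomputable def partialDeriv2 (a b : ℕ) (f : ℝ → ℝ → ℝ) : ℝ → ℝ → ℝ :=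
  fun x y => iteratedDeriv b (fun y' => iteratedDeriv a (fun x' => f x' y') x) y

/-- Bounded measurable functions vanishing outside `[-L, L]`. -/
def NiceW (L : ℝ) (φ : ℝ → ℝ) : Prop :=
  Measurable φ ∧ (∃ B : ℝ, ∀ x, |φ x| ≤ B) ∧ ∀ x : ℝ, L < |x| → φ x = 0

lemma NiceW.integrable_mul {L : ℝ} {φ : ℝ → ℝ} (h : NiceW L φ) {u : ℝ → ℝ} (hu : Continuous u) :
    Integrable (fun x => u x * φ x) := by
  obtain ⟨hm, ⟨B, hB⟩, hs⟩ := h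
  have h1 : IntegrableOn (fun x => u x * φ x) (Set.Icc (-L) L) := by
    refine Integrable.mul_bdd (c := B) (hu.integrableOn_Icc) hm.aestronglyMeasurable ?_
    exact Filter.Eventually.of_forall fun x => by simpa using hB x
  refine (integrableOn_iff_integrable_of_support_subset ?_).1 h1
  intro x hx
  by_contra hc
  apply hx
  have : L < |x| := by
    by_contra h2
    exact hc (abs_le.1 (not_lt.1 h2))
  simp [hs x this]

lemma NiceW.integrable {L : ℝ} {φ : ℝ → ℝ} (h : NiceW L φ) : Integrable φ := by
  simpa using h.integrable_mul (u := fun _ => 1) continuous_const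

lemma integral_full {L c : ℝ} (hL : 0 < L) (hc : L ≤ c) {φ : ℝ → ℝ}
    (hs : ∀ x : ℝ, L < |x| → φ x = 0) :
    ∫ x in (-L)..c, φ x = ∫ x, φ x := by
  rw [intervalIntegral.integral_of_le (by linarith), ← integral_Icc_eq_integral_Ioc]
  apply setIntegral_eq_integral_of_forall_compl_eq_zero
  intro x hx
  apply hs
  by_contra h2
  have := abs_le.1 (not_lt.1 h2)
  exact hx ⟨this.1, this.2.trans hc⟩

lemma NiceW.prim {L : ℝ} (hL : 0 < L) {φ : ℝ → ℝ} (h : NiceW L φ) (h0 : ∫ x, φ x = 0) :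
    NiceW L (fun x => ∫ t in (-L)..x, φ t) := by
  have hi := h.integrable
  refine ⟨?_, ⟨∫ x, ‖φ x‖, fun x => ?_⟩, fun x hx => ?_⟩
  · exact (intervalIntegral.continuous_primitive (fun a b => hi.intervalIntegrable) _).measurable
  · refine (intervalIntegral.norm_integral_le_integral_norm_uIoc (f := φ)).trans ?_
    exact setIntegral_le_integral hi.norm (Filter.Eventually.of_forall fun x => norm_nonneg _)
  · rcases lt_abs.1 hx with h1 | h1
    · simp only [integral_full hL h1.le h.2.2, h0]
    · simp only
      rw [intervalIntegral.integral_symm, intervalIntegral.integral_of_le (by linarith),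
        integral_Ioc_eq_integral_Ioo, setIntegral_eq_zero_of_forall_eq_zero, neg_zero]
      intro t ht
      apply h.2.2
      rw [lt_abs]; right; linarith [ht.2]

lemma NiceW.parts {L : ℝ} (hL : 0 < L) {φ : ℝ → ℝ} (h : NiceW L φ) (h0 : ∫ x, φ x = 0)
    {u : ℝ → ℝ} (hu : ContDiff ℝ 1 u) :
    ∫ x, u x * φ x = - ∫ x, deriv u x * ∫ t in (-L)..x, φ t := by
  have hi := h.integrable
  have hp := h.prim hL h0
  rw [← integral_full hL le_rfl (φ := fun x => u x * φ x)
      (fun x hx => by simp [h.2.2 x hx]),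
    ← integral_full hL le_rfl (φ := fun x => deriv u x * ∫ t in (-L)..x, φ t)
      (fun x hx => by have := hp.2.2 x hx; simp only at this; simp [this])]
  have hAu : AbsolutelyContinuousOnInterval u (-L) L := by
    obtain ⟨K, hK⟩ := (hu.contDiffOn (s := Set.uIcc (-L) L)).exists_lipschitzOnWith
      (by norm_num) (convex_uIcc _ _) isCompact_uIcc
    exact hK.absolutelyContinuousOnInterval
  have hAp : AbsolutelyContinuousOnInterval (fun x => ∫ t in (-L)..x, φ t) (-L) L := by
    obtain ⟨B, hB⟩ := h.2.1
    have hB0 : 0 ≤ B := (abs_nonneg _).trans (hB 0)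
    refine LipschitzOnWith.absolutelyContinuousOnInterval (K := ⟨B, hB0⟩) ?_
    refine LipschitzOnWith.of_dist_le_mul fun x _ y _ => ?_
    rw [dist_eq_norm, intervalIntegral.integral_interval_sub_left hi.intervalIntegrable
      hi.intervalIntegrable]
    exact intervalIntegral.norm_integral_le_of_norm_le_const fun t _ => hB t
  have key := hAu.integral_mul_deriv_eq_deriv_mul hAp
  have e : ∫ x in (-L)..L, u x * φ x
      = ∫ x in (-L)..L, u x * deriv (fun x => ∫ t in (-L)..x, φ t) x := by
    apply intervalIntegral.integral_congr_ae
    filter_upwards [_root_.LocallyIntegrable.ae_hasDerivAt_integral hi.locallyIntegrable] with x hx _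
    rw [(hx (-L)).deriv]
  rw [e, key, integral_full hL le_rfl h.2.2, h0]
  simp

/-- Affine change of variables. -/
lemma integral_affine (g : ℝ → ℝ) {σ : ℝ} (hσ : 0 < σ) (θ : ℝ) :
    ∫ x, g (σ * x - θ) = σ⁻¹ * ∫ s, g s := by
  rw [Measure.integral_comp_mul_left (fun y => g (y - θ)) σ, integral_sub_right_eq_self g θ,
    abs_of_pos (inv_pos.2 hσ), smul_eq_mul]

lemma NiceW.parts_scaled {L : ℝ} (hL : 0 < L) {φ : ℝ → ℝ} (h : NiceW L φ) (h0 : ∫ x, φ x = 0)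
    {u : ℝ → ℝ} (hu : ContDiff ℝ 1 u) {σ : ℝ} (hσ : 0 < σ) (θ : ℝ) :
    ∫ x, u x * φ (σ * x - θ)
      = (-σ⁻¹) * ∫ x, deriv u x * ∫ t in (-L)..(σ * x - θ), φ t := by
  have hx : ∀ x, (σ * x - θ + θ) / σ = x := fun x => by field_simp; ring
  have e1 := integral_affine (fun s => u ((s + θ) / σ) * φ s) hσ θ
  have e2 := integral_affine (fun s => deriv u ((s + θ) / σ) * ∫ t in (-L)..s, φ t) hσ θ
  simp only [hx] at e1 e2
  have hv : ContDiff ℝ 1 (fun s => u ((s + θ) / σ)) := hu.comp (by fun_prop)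
  have hd : ∀ s, deriv (fun s => u ((s + θ) / σ)) s = σ⁻¹ * deriv u ((s + θ) / σ) := by
    intro s
    have h1 : HasDerivAt (fun s => (s + θ) / σ) (1 / σ) s :=
      ((hasDerivAt_id s).add_const θ).div_const σ
    have h2 : HasDerivAt u (deriv u ((s + θ) / σ)) ((s + θ) / σ) :=
      ((hu.differentiable (by norm_num)) _).hasDerivAt
    have h3 := h2.comp s h1
    rw [show (fun s => u ((s + θ) / σ)) = u ∘ (fun s => (s + θ) / σ) from rfl, h3.deriv]
    ring
  rw [e1, e2, h.parts hL h0 hv]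
  simp only [hd, mul_assoc]
  rw [integral_const_mul]
  ring

lemma Psi_props {M : ℕ} {L : ℝ} (hL : 0 < L) {ψ : ℝ → ℝ} (h : NiceW L ψ)
    (hmom : ∀ k : ℕ, k < M → ∫ x : ℝ, x ^ k * ψ x = 0) (m : ℕ) (hm : m ≤ M) :
    NiceW L (Psi L ψ m) ∧ ∀ k : ℕ, k + m < M → ∫ x : ℝ, x ^ k * Psi L ψ m x = 0 := by
  induction m with
  | zero => exact ⟨h, hmom⟩
  | succ m ih =>
    obtain ⟨hn, hk⟩ := ih (by omega)
    have h0 : ∫ x, Psi L ψ m x = 0 := by simpa using hk 0 (by omega)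
    refine ⟨hn.prim hL h0, fun k hkm => ?_⟩
    have := hn.parts hL h0 (u := fun x => x ^ (k + 1)) (by fun_prop)
    rw [hk (k + 1) (by omega)] at this
    simp only [deriv_pow_field, mul_assoc, Nat.add_sub_cancel] at this
    rw [integral_const_mul] at this
    have h2 : ((k + 1 : ℕ) : ℝ) ≠ 0 := by positivity
    have h3 := (neg_eq_zero.1 this.symm)
    exact (mul_eq_zero.1 h3).resolve_left h2

lemma oneD {M : ℕ} {L : ℝ} (hL : 0 < L) {ψ : ℝ → ℝ} (h : NiceW L ψ)
    (hmom : ∀ k : ℕ, k < M → ∫ x : ℝ, x ^ k * ψ x = 0) {g : ℝ → ℝ} (hg : ContDiff ℝ M g)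
    {σ : ℝ} (hσ : 0 < σ) (θ : ℝ) (m : ℕ) (hm : m ≤ M) :
    ∫ x, g x * ψ (σ * x - θ)
      = (-σ⁻¹) ^ m * ∫ x, iteratedDeriv m g x * Psi L ψ m (σ * x - θ) := by
  induction m with
  | zero => simp [Psi]
  | succ m ih =>
    obtain ⟨hn, hk⟩ := Psi_props hL h hmom m (by omega)
    have h0 : ∫ x, Psi L ψ m x = 0 := by simpa using hk 0 (by omega)
    have hc : ContDiff ℝ 1 (iteratedDeriv m g) := by
      refine ContDiff.iterate_deriv' 1 m (hg.of_le ?_) |> fun h => by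
        rwa [iteratedDeriv_eq_iterate]
      exact_mod_cast (by omega : 1 + m ≤ M)
    rw [ih (by omega), hn.parts_scaled hL h0 hc hσ θ, iteratedDeriv_succ, pow_succ]
    simp only [Psi]
    ring

lemma scaled_supp {L : ℝ} {φ : ℝ → ℝ} (h : NiceW L φ) {σ : ℝ} (hσ : 0 < σ) (θ x : ℝ)
    (hx : x ∉ Set.Icc ((θ - L) / σ) ((θ + L) / σ)) : φ (σ * x - θ) = 0 := by
  apply h.2.2
  by_contra h2
  have := abs_le.1 (not_lt.1 h2)
  apply hx
  constructor
  · rw [div_le_iff₀ hσ]; linarith [this.1, mul_comm x σ]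
  · rw [le_div_iff₀ hσ]; linarith [this.2, mul_comm x σ]

lemma integrable2 {L : ℝ} {φ χ : ℝ → ℝ} (h : NiceW L φ) (h' : NiceW L χ) {σ₁ σ₂ : ℝ}
    (h₁ : 0 < σ₁) (h₂ : 0 < σ₂) (θ₁ θ₂ : ℝ) {F : ℝ × ℝ → ℝ} (hF : Continuous F) :
    Integrable (fun z : ℝ × ℝ => F z * (φ (σ₁ * z.1 - θ₁) * χ (σ₂ * z.2 - θ₂)))
      (volume.prod volume) := by
  set S := Set.Icc ((θ₁ - L) / σ₁) ((θ₁ + L) / σ₁) ×ˢ Set.Icc ((θ₂ - L) / σ₂) ((θ₂ + L) / σ₂)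
  have hS : IsCompact S := isCompact_Icc.prod isCompact_Icc
  obtain ⟨B, hB⟩ := h.2.1
  obtain ⟨C, hC⟩ := h'.2.1
  have hm : Measurable fun z : ℝ × ℝ => φ (σ₁ * z.1 - θ₁) * χ (σ₂ * z.2 - θ₂) :=
    (h.1.comp (by fun_prop)).mul (h'.1.comp (by fun_prop))
  have h1 : IntegrableOn (fun z : ℝ × ℝ => F z * (φ (σ₁ * z.1 - θ₁) * χ (σ₂ * z.2 - θ₂))) S
      (volume.prod volume) := by
    refine Integrable.mul_bdd (c := B * C) (hF.continuousOn.integrableOn_compact hS)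
      hm.aestronglyMeasurable ?_
    refine Filter.Eventually.of_forall fun z => ?_
    rw [norm_mul]
    exact mul_le_mul (hB _) (hC _) (norm_nonneg _) ((abs_nonneg _).trans (hB 0))
  refine (integrableOn_iff_integrable_of_support_subset ?_).1 h1
  intro z hz
  by_contra hc
  apply hz
  by_cases hz1 : z.1 ∈ Set.Icc ((θ₁ - L) / σ₁) ((θ₁ + L) / σ₁)
  · have hz2 : z.2 ∉ Set.Icc ((θ₂ - L) / σ₂) ((θ₂ + L) / σ₂) := fun hz2 => hc ⟨hz1, hz2⟩
    simp [scaled_supp h' h₂ θ₂ _ hz2]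
  · simp [scaled_supp h h₁ θ₁ _ hz1]


/-- If `ψ̃` has `M` vanishing moments then for every `f : ℝ² → ℝ` with all mixed
partials `∂^{a+b} f/∂x^a∂y^b`, `0 ≤ a, b ≤ M`, existing and continuous,
`∬ f(x,y) ψ̃(σ₁x−θ₁) ψ̃(σ₂y−θ₂) dx dy
  = (σ₁σ₂)^{−M} ∬ Ψ_M(σ₁x−θ₁) Ψ_M(σ₂y−θ₂) ∂^{2M} f/∂x^M∂y^M dx dy`,
both integrands being supported in the rectangle `R(σ₁,θ₁,σ₂,θ₂)`. -/
theorem rect_wavelet_mixed_partial_integration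
    (M : ℕ) (hM : 0 < M) (L : ℝ) (hL : 0 < L)
    (ψ : ℝ → ℝ) (hmeas : Measurable ψ) (hbdd : ∃ B : ℝ, ∀ x, |ψ x| ≤ B)
    (hsupp : ∀ x : ℝ, L < |x| → ψ x = 0)
    (hmom : ∀ k : ℕ, k < M → ∫ x : ℝ, x ^ k * ψ x = 0) :
    ∀ f : ℝ → ℝ → ℝ,
      (∀ y : ℝ, ContDiff ℝ M fun x => f x y) →
      (∀ a : ℕ, a ≤ M → ∀ x : ℝ,
        ContDiff ℝ M fun y => iteratedDeriv a (fun x' => f x' y) x) →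
      (∀ a b : ℕ, a ≤ M → b ≤ M →
        Continuous fun z : ℝ × ℝ => partialDeriv2 a b f z.1 z.2) →
      ∀ σ₁ σ₂ : ℝ, 0 < σ₁ → 0 < σ₂ → ∀ θ₁ θ₂ : ℝ,
        (∀ z : ℝ × ℝ,
          z ∉ Set.Icc ((θ₁ - L) / σ₁) ((θ₁ + L) / σ₁) ×ˢ
              Set.Icc ((θ₂ - L) / σ₂) ((θ₂ + L) / σ₂) →
            f z.1 z.2 * ψ (σ₁ * z.1 - θ₁) * ψ (σ₂ * z.2 - θ₂) = 0) ∧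
        (∀ z : ℝ × ℝ,
          z ∉ Set.Icc ((θ₁ - L) / σ₁) ((θ₁ + L) / σ₁) ×ˢ
              Set.Icc ((θ₂ - L) / σ₂) ((θ₂ + L) / σ₂) →
            Psi L ψ M (σ₁ * z.1 - θ₁) * Psi L ψ M (σ₂ * z.2 - θ₂) *
              partialDeriv2 M M f z.1 z.2 = 0) ∧
        ∫ z : ℝ × ℝ, f z.1 z.2 * ψ (σ₁ * z.1 - θ₁) * ψ (σ₂ * z.2 - θ₂) =
          (σ₁ * σ₂) ^ (-(M : ℤ)) *
            ∫ z : ℝ × ℝ, Psi L ψ M (σ₁ * z.1 - θ₁) * Psi L ψ M (σ₂ * z.2 - θ₂) *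
              partialDeriv2 M M f z.1 z.2 := by
  intro f hfx hfy hcont σ₁ σ₂ h₁ h₂ θ₁ θ₂
  have hψ : NiceW L ψ := ⟨hmeas, hbdd, hsupp⟩
  obtain ⟨hP, -⟩ := Psi_props hL hψ hmom M le_rfl
  refine ⟨fun z hz => ?_, fun z hz => ?_, ?_⟩
  · by_cases hz1 : z.1 ∈ Set.Icc ((θ₁ - L) / σ₁) ((θ₁ + L) / σ₁)
    · have hz2 : z.2 ∉ Set.Icc ((θ₂ - L) / σ₂) ((θ₂ + L) / σ₂) := fun hz2 => hz ⟨hz1, hz2⟩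
      simp [scaled_supp hψ h₂ θ₂ _ hz2]
    · simp [scaled_supp hψ h₁ θ₁ _ hz1]
  · by_cases hz1 : z.1 ∈ Set.Icc ((θ₁ - L) / σ₁) ((θ₁ + L) / σ₁)
    · have hz2 : z.2 ∉ Set.Icc ((θ₂ - L) / σ₂) ((θ₂ + L) / σ₂) := fun hz2 => hz ⟨hz1, hz2⟩
      simp [scaled_supp hP h₂ θ₂ _ hz2]
    · simp [scaled_supp hP h₁ θ₁ _ hz1]
  · have c0 : Continuous fun z : ℝ × ℝ => f z.1 z.2 := by
      simpa [partialDeriv2] using hcont 0 0 (by omega) (by omega)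
    have c1 : Continuous fun z : ℝ × ℝ => iteratedDeriv M (fun x' => f x' z.2) z.1 := by
      simpa [partialDeriv2] using hcont M 0 le_rfl (by omega)
    have c2 := hcont M M le_rfl le_rfl
    have i0 := integrable2 hψ hψ h₁ h₂ θ₁ θ₂ c0
    have i1 := integrable2 hP hψ h₁ h₂ θ₁ θ₂ c1
    have i2 := integrable2 hP hP h₁ h₂ θ₁ θ₂ c2
    calc ∫ z : ℝ × ℝ, f z.1 z.2 * ψ (σ₁ * z.1 - θ₁) * ψ (σ₂ * z.2 - θ₂)
        = ∫ y, ∫ x, f x y * (ψ (σ₁ * x - θ₁) * ψ (σ₂ * y - θ₂)) := by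
          simp only [mul_assoc]
          exact integral_prod_symm _ i0
      _ = ∫ y, (-σ₁⁻¹) ^ M * ∫ x, iteratedDeriv M (fun x' => f x' y) x *
            (Psi L ψ M (σ₁ * x - θ₁) * ψ (σ₂ * y - θ₂)) := by
          congr 1; ext y
          simp only [← mul_assoc]
          rw [integral_mul_const, integral_mul_const,
            oneD hL hψ hmom (hfx y) h₁ θ₁ M le_rfl]
          ring
      _ = (-σ₁⁻¹) ^ M * ∫ x, ∫ y, iteratedDeriv M (fun x' => f x' y) x *
            (Psi L ψ M (σ₁ * x - θ₁) * ψ (σ₂ * y - θ₂)) := by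
          rw [integral_const_mul]
          congr 1
          exact (integral_integral_swap (f := fun x y => iteratedDeriv M (fun x' => f x' y) x *
            (Psi L ψ M (σ₁ * x - θ₁) * ψ (σ₂ * y - θ₂))) i1).symm
      _ = (-σ₁⁻¹) ^ M * ∫ x, (-σ₂⁻¹) ^ M * ∫ y, partialDeriv2 M M f x y *
            (Psi L ψ M (σ₁ * x - θ₁) * Psi L ψ M (σ₂ * y - θ₂)) := by
          congr 2; ext x
          have := oneD hL hψ hmom (hfy M le_rfl x) h₂ θ₂ M le_rfl
          simp only [mul_left_comm _ (Psi L ψ M (σ₁ * x - θ₁))]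
          rw [integral_const_mul, integral_const_mul, this]
          simp only [partialDeriv2]
          ring
      _ = ((-σ₁⁻¹) ^ M * (-σ₂⁻¹) ^ M) * ∫ x, ∫ y, partialDeriv2 M M f x y *
            (Psi L ψ M (σ₁ * x - θ₁) * Psi L ψ M (σ₂ * y - θ₂)) := by
          rw [integral_const_mul, mul_assoc]
      _ = _ := by
          congr 1
          · rw [← mul_pow, neg_mul_neg, ← mul_inv, zpow_neg, zpow_natCast, inv_pow]
          · refine (integral_prod _ i2).symm.trans ?_
            refine integral_congr_ae (Filter.Eventually.of_forall fun z => ?_)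
            simp only
            ring
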